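/- arXiv:1310.5634 — 3 statements merged into one kernel-verified Lean document; each statement's English description precedes it below -/
import Mathlib

section
/- Let n and m be positive integers with n ≤ m ≤ (2n choose 2), and let G be a finite simple graph with exactly 2n vertices and m edges. Then the number of perfect matchings of G is at most ω(2n,m), where α := m - n·⌊m/n⌋ and ω(2n,m) := (⌊m/n⌋!)^{(n-α)/⌊m/n⌋} · (⌈m/n⌉!)^{α/⌈m/n⌉}. -/
open Nat

/-- The number of perfect matchings of a simple graph. -/
noncomputable def perfmat {V : Type*} (G : SimpleGraph V) : ℕ :=
  {M : G.Subgraph | M.IsPerfectMatching}.ncard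

/-- `ω(2n,m) = (⌊m/n⌋!)^{(n-α)/⌊m/n⌋} · (⌈m/n⌉!)^{α/⌈m/n⌉}` where `α = m - n⌊m/n⌋`. -/
noncomputable def omega2 (n m : ℕ) : ℝ :=
  ((m / n)! : ℝ) ^ (((n : ℝ) - ((m - n * (m / n) : ℕ) : ℝ)) / ((m / n : ℕ) : ℝ)) *
    (((m + n - 1) / n)! : ℝ) ^ (((m - n * (m / n) : ℕ) : ℝ) / (((m + n - 1) / n : ℕ) : ℝ))

/-- `log (d!) / d`, the contribution of a row with `d` ones to Brègman's bound. -/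
noncomputable def logFactorialDiv (d : ℕ) : ℝ := Real.log (d ! : ℝ) / d

lemma log_factorial_succ (r : ℕ) :
    Real.log ((r + 1)! : ℝ) = Real.log ((r : ℝ) + 1) + Real.log (r ! : ℝ) := by
  rw [Nat.factorial_succ]
  push_cast
  exact Real.log_mul (by positivity) (by positivity)

lemma two_mul_log_factorial_le (r : ℕ) :
    2 * Real.log (r ! : ℝ) ≤
      r * (r + 3) * Real.log ((r : ℝ) + 1) - r * (r + 1) * Real.log ((r : ℝ) + 2) := by
  induction r with
  | zero => simp
  | succ r ih =>
    have hconc : Real.log ((r : ℝ) + 3) + Real.log ((r : ℝ) + 1) ≤ 2 * Real.log ((r : ℝ) + 2) := by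
      rw [two_mul, ← Real.log_mul (by positivity) (by positivity),
        ← Real.log_mul (by positivity) (by positivity)]
      exact Real.log_le_log (by positivity) (by nlinarith)
    have hmul := mul_le_mul_of_nonneg_left hconc
      (show (0 : ℝ) ≤ ((r : ℝ) + 1) * (r + 2) by positivity)
    rw [log_factorial_succ]
    push_cast
    rw [show (r : ℝ) + 1 + 1 = r + 2 by ring, show (r : ℝ) + 1 + 2 = r + 3 by ring]
    linarith

lemma logFactorialDiv_concave {r : ℕ} (hr : 1 ≤ r) :
    logFactorialDiv (r + 2) - logFactorialDiv (r + 1) ≤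
      logFactorialDiv (r + 1) - logFactorialDiv r := by
  have hr' : (0 : ℝ) < r := by exact_mod_cast hr
  have h := two_mul_log_factorial_le r
  simp only [logFactorialDiv]
  rw [log_factorial_succ (r + 1), log_factorial_succ r]
  push_cast
  rw [show (r : ℝ) + 1 + 1 = r + 2 by ring, ← sub_nonneg]
  have key : (Real.log ((r : ℝ) + 1) + Real.log (r ! : ℝ)) / (r + 1) - Real.log (r ! : ℝ) / r -
      ((Real.log ((r : ℝ) + 2) + (Real.log ((r : ℝ) + 1) + Real.log (r ! : ℝ))) / (r + 2) -
        (Real.log ((r : ℝ) + 1) + Real.log (r ! : ℝ)) / (r + 1)) =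
      (r * (r + 3) * Real.log ((r : ℝ) + 1) - r * (r + 1) * Real.log ((r : ℝ) + 2) -
        2 * Real.log (r ! : ℝ)) / (r * (r + 1) * (r + 2)) := by
    field_simp
    ring
  rw [key]
  exact div_nonneg (by linarith) (by positivity)

lemma logFactorialDiv_le_linear {q d : ℕ} (hq : 1 ≤ q) (hd : 1 ≤ d) :
    logFactorialDiv d ≤ logFactorialDiv q +
      ((d : ℝ) - q) * (logFactorialDiv (q + 1) - logFactorialDiv q) := by
  have hanti : ∀ a b : ℕ, 1 ≤ a → a ≤ b → logFactorialDiv (b + 1) - logFactorialDiv b ≤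
      logFactorialDiv (a + 1) - logFactorialDiv a := by
    intro a b ha hab
    induction b, hab using Nat.le_induction with
    | base => exact le_rfl
    | succ b hb ih => exact (logFactorialDiv_concave (ha.trans hb)).trans ih
  rcases le_total q d with h | h
  · induction d, h using Nat.le_induction with
    | base => simp
    | succ d hqd ih =>
      have h1 := ih (hq.trans hqd)
      have h2 := hanti q d hq hqd
      push_cast
      linarith
  · induction h using Nat.decreasingInduction with
    | self => simp
    | of_succ d hdq ih =>
      have h1 := ih (by omega)
      have h2 := hanti d q hd hdq.le
      push_cast at h1
      linarith

lemma logFactorialDiv_nonneg (d : ℕ) : 0 ≤ logFactorialDiv d :=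
  div_nonneg (Real.log_nonneg (by exact_mod_cast Nat.one_le_iff_ne_zero.2 d.factorial_ne_zero))
    (by positivity)

lemma cast_mul_logFactorialDiv (d : ℕ) : d * logFactorialDiv d = Real.log (d ! : ℝ) := by
  rcases eq_or_ne d 0 with rfl | h
  · simp
  · unfold logFactorialDiv
    field_simp

/-- The discrete entropy bound `P log P ≤ P log |K| + ∑ P_k log P_k` for `P = ∑ P_k`. -/
lemma sum_mul_log_le {κ : Type*} (K : Finset κ) (p : κ → ℝ) (hp : ∀ k ∈ K, 0 ≤ p k)
    (hpos : 0 < ∑ k ∈ K, p k) :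
    (∑ k ∈ K, p k) * Real.log (∑ k ∈ K, p k) ≤
      (∑ k ∈ K, p k) * Real.log K.card + ∑ k ∈ K, p k * Real.log (p k) := by
  set P := ∑ k ∈ K, p k with hP
  have hK : 0 < (K.card : ℝ) := by
    have : K.Nonempty := by
      by_contra h
      rw [Finset.not_nonempty_iff_eq_empty] at h
      simp [hP, h] at hpos
    exact_mod_cast this.card_pos
  have hterm : ∀ k ∈ K, p k * Real.log (P / K.card) + p k - P / K.card ≤
      p k * Real.log (p k) := by
    intro k hk
    rcases (hp k hk).eq_or_lt with h | h
    · rw [← h]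
      simp only [zero_mul, zero_add, zero_sub]
      exact neg_nonpos.2 (by positivity)
    · have h1 := Real.log_le_sub_one_of_pos (show 0 < P / K.card / p k by positivity)
      rw [Real.log_div (by positivity) h.ne'] at h1
      have h2 := mul_le_mul_of_nonneg_left h1 h.le
      rw [mul_sub, mul_sub, mul_div_cancel₀ _ h.ne'] at h2
      linarith
  have hsum := Finset.sum_le_sum hterm
  rw [Finset.sum_sub_distrib, Finset.sum_add_distrib, ← Finset.sum_mul, ← hP, Finset.sum_const,
    nsmul_eq_mul, mul_div_cancel₀ _ hK.ne', Real.log_div hpos.ne' hK.ne'] at hsum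
  linarith

/-- The union of two fixed-point-free involutions is bipartite. -/
lemma exists_bool_coloring_of_involutions {V : Type*} [Finite V] (σ ρ : Equiv.Perm V)
    (hσ : ∀ x, σ (σ x) = x) (hρ : ∀ x, ρ (ρ x) = x) (hσ' : ∀ x, σ x ≠ x)
    (hρ' : ∀ x, ρ x ≠ x) :
    ∃ col : V → Bool, ∀ x, col (σ x) = !col x ∧ col (ρ x) = !col x := by
  classical
  set π : Equiv.Perm V := σ * ρ with hπ
  have hconj : SemiconjBy σ π π⁻¹ := by
    ext x
    have : (π⁻¹ : Equiv.Perm V) = ρ * σ := by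
      rw [inv_eq_iff_mul_eq_one]
      ext x
      simp [hπ, hσ, hρ]
    rw [this]
    simp [hπ, hσ]
  have hpow (k : ℤ) (x : V) : σ ((π ^ k) x) = (π ^ (-k)) (σ x) := by
    have := congrArg (fun e : Equiv.Perm V => e x) (hconj.zpow_right k)
    simpa [zpow_neg] using this
  have hne (x : V) : ¬ π.SameCycle x (σ x) := by
    rintro ⟨k, hk⟩
    rcases Int.even_or_odd' k with ⟨j, rfl | rfl⟩
    · apply hσ' ((π ^ j) x)
      rw [hpow, ← hk, ← Equiv.Perm.mul_apply, ← zpow_add]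
      congr 2
      ring
    · apply hρ' ((π ^ j) x)
      have : ρ ((π ^ j) x) = σ ((π ^ (1 + j)) x) := by
        rw [zpow_add, zpow_one, Equiv.Perm.mul_apply, hπ, Equiv.Perm.mul_apply, hσ]
      rw [this, hpow, ← hk, ← Equiv.Perm.mul_apply, ← zpow_add]
      congr 2
      ring
  let Q := Quotient (Equiv.Perm.SameCycle.setoid π)
  let key : V → Fin (Nat.card Q) := fun x => Finite.equivFin Q (Quotient.mk _ x)
  have hkey (x y : V) : key x = key y ↔ π.SameCycle x y := by
    simp only [key, EmbeddingLike.apply_eq_iff_eq]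
    exact Quotient.eq
  have h1 (x : V) : key (ρ x) = key (σ x) := (hkey _ _).2 ⟨1, by simp [hπ, hρ]⟩
  have h2 (x : V) : key (σ (ρ x)) = key x := ((hkey _ _).2 ⟨1, by simp [hπ]⟩).symm
  refine ⟨fun x => decide (key x < key (σ x)), fun x => ?_⟩
  have h3 : key x ≠ key (σ x) := fun h => hne x ((hkey _ _).1 h)
  have h4 : decide (key (σ x) < key x) = !decide (key x < key (σ x)) := by
    rw [← decide_not, decide_eq_decide, not_lt]
    exact ⟨le_of_lt, fun h => lt_of_le_of_ne h h3.symm⟩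
  exact ⟨by simpa only [hσ] using h4, by simpa only [h1, h2] using h4⟩

/-- The permutations obtained by orienting the union of two fixed-point-free involutions, with
the orientation normalised at a representative of every cycle. -/
lemma exists_oriented_perm {V : Type*} [Finite V] (σ ρ : Equiv.Perm V)
    (hσ : ∀ x, σ (σ x) = x) (hρ : ∀ x, ρ (ρ x) = x) (hσ' : ∀ x, σ x ≠ x)
    (hρ' : ∀ x, ρ x ≠ x) :
    ∃ (τ : Equiv.Perm V) (col : V → Bool),
      (∀ x, col (σ x) = !col x) ∧ (∀ x, col (ρ x) = !col x) ∧
      (∀ x, τ x = if col x then σ x else ρ x) ∧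
      ∀ x, col (Quotient.mk (Relation.EqvGen.setoid fun a b => τ a = b) x).out = true := by
  classical
  obtain ⟨c, hc⟩ := exists_bool_coloring_of_involutions σ ρ hσ hρ hσ' hρ'
  set s : Setoid V := Relation.EqvGen.setoid fun a b => σ a = b ∨ ρ a = b with hs
  let rep : V → V := fun x => (Quotient.mk s x).out
  have hrep_eq (x y : V) (h : s x y) : rep x = rep y := by
    simp only [rep]
    rw [Quotient.sound h]
  have hrep (x : V) : s (rep x) x := Quotient.mk_out x
  let col : V → Bool := fun x => (c x == c (rep x))
  have hcσ (x : V) : col (σ x) = !col x := by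
    simp only [col, (hc x).1, ← hrep_eq x (σ x) (Relation.EqvGen.rel _ _ (Or.inl rfl))]
    cases c x <;> cases c (rep x) <;> rfl
  have hcρ (x : V) : col (ρ x) = !col x := by
    simp only [col, (hc x).2, ← hrep_eq x (ρ x) (Relation.EqvGen.rel _ _ (Or.inr rfl))]
    cases c x <;> cases c (rep x) <;> rfl
  let f : V → V := fun x => if col x then σ x else ρ x
  let g : V → V := fun x => if col x then ρ x else σ x
  have hgf : Function.LeftInverse g f := by
    intro x
    cases h : col x <;> simp [f, g, h, hcσ, hcρ, hσ, hρ]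
  have hfg : Function.RightInverse g f := by
    intro x
    cases h : col x <;> simp [f, g, h, hcσ, hcρ, hσ, hρ]
  refine ⟨⟨f, g, hgf, hfg⟩, col, hcσ, hcρ, fun x => rfl, fun x => ?_⟩
  have hset : (Relation.EqvGen.setoid fun a b => f a = b) = s := by
    apply le_antisymm
    · refine Setoid.eqvGen_le fun a b hab => Relation.EqvGen.rel _ _ ?_
      simp only [f] at hab
      split_ifs at hab
      · exact Or.inl hab
      · exact Or.inr hab
    · refine Setoid.eqvGen_le fun a b hab => ?_
      rcases hab with rfl | rfl
      · cases h : col a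
        · exact Relation.EqvGen.symm _ _ (Relation.EqvGen.rel _ _ (by simp [f, hcσ, h, hσ]))
        · exact Relation.EqvGen.rel _ _ (by simp [f, h])
      · cases h : col a
        · exact Relation.EqvGen.rel _ _ (by simp [f, h])
        · exact Relation.EqvGen.symm _ _ (Relation.EqvGen.rel _ _ (by simp [f, hcρ, h, hρ]))
  change col (Quotient.mk (Relation.EqvGen.setoid fun a b => f a = b) x).out = true
  rw [hset]
  change (c (rep x) == c (rep (rep x))) = true
  rw [hrep_eq _ _ (hrep x)]
  exact beq_self_eq_true _

/-- The number of fixed-point-free involutions respecting a relation, squared, is at most the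
number of permutations respecting it. -/
lemma card_involutions_sq_le {V : Type*} [Finite V] (R : V → V → Prop) (hR : ∀ x, ¬ R x x) :
    Nat.card {σ : Equiv.Perm V // (∀ x, R x (σ x)) ∧ ∀ x, σ (σ x) = x} ^ 2 ≤
      Nat.card {τ : Equiv.Perm V // ∀ x, R x (τ x)} := by
  classical
  have hfix (σ : Equiv.Perm V) (h : ∀ x, R x (σ x)) (x : V) : σ x ≠ x :=
    fun hx => hR x (by simpa [hx] using h x)
  let I := {σ : Equiv.Perm V // (∀ x, R x (σ x)) ∧ ∀ x, σ (σ x) = x}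
  choose F col hcσ hcρ hF hout using fun p : I × I =>
    exists_oriented_perm p.1.1 p.2.1 p.1.2.2 p.2.2.2 (hfix _ p.1.2.1) (hfix _ p.2.2.1)
  rw [sq, ← Nat.card_prod]
  refine Nat.card_le_card_of_injective
    (fun p : I × I => (⟨F p, fun x => ?_⟩ : {τ : Equiv.Perm V // ∀ x, R x (τ x)})) ?_
  · rw [hF]
    split_ifs
    · exact p.1.2.1 x
    · exact p.2.2.1 x
  · intro p q hpq
    have hFpq : F p = F q := congrArg Subtype.val hpq
    have hflip (p : I × I) (x : V) : col p (F p x) = !col p x := by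
      rw [hF]
      split_ifs
      · exact hcσ p x
      · exact hcρ p x
    have hprop (x y : V) (h : Relation.EqvGen (fun a b => F p a = b) x y) :
        (col p x = col q x ↔ col p y = col q y) := by
      induction h with
      | rel a b hab =>
        have h1 := hflip p a
        have h2 := hflip q a
        rw [← hFpq, hab] at h2
        rw [hab] at h1
        rw [h1, h2, Bool.not_inj_iff]
      | refl => exact Iff.rfl
      | symm _ _ _ ih => exact ih.symm
      | trans _ _ _ _ _ ih1 ih2 => exact ih1.trans ih2
    have hcol (x : V) : col p x = col q x := by
      have h1 := hout p x
      have h2 := hout q x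
      rw [← hFpq] at h2
      exact (hprop _ _ (Quotient.mk_out (s := Relation.EqvGen.setoid fun a b => F p a = b) x)).1
        (h1.trans h2.symm)
    have hσ (x : V) (hx : col p x = true) : p.1.1 x = q.1.1 x := by
      have h1 := hF p x
      have h2 := hF q x
      rw [← hFpq, h1, ← hcol, hx] at h2
      simpa using h2
    have hρ (x : V) (hx : col p x = false) : p.2.1 x = q.2.1 x := by
      have h1 := hF p x
      have h2 := hF q x
      rw [← hFpq, h1, ← hcol, hx] at h2
      simpa using h2
    refine Prod.ext (Subtype.ext (Equiv.ext fun x => ?_)) (Subtype.ext (Equiv.ext fun x => ?_))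
    · cases h : col p x
      · have h1 := hσ (p.1.1 x) (by rw [hcσ, h]; rfl)
        rw [p.1.2.2] at h1
        exact q.1.1.injective ((q.1.2.2 x).trans h1).symm
      · exact hσ x h
    · cases h : col p x
      · exact hρ x h
      · have h1 := hρ (p.2.1 x) (by rw [hcρ, h]; rfl)
        rw [p.2.2.2] at h1
        exact q.2.1.injective ((q.2.2.2 x).trans h1).symm

universe u

open Finset in
/-- Removing a point from the type and from a subset of it agree on cardinalities. -/
lemma card_filter_ne_eq_card_erase {κ : Type*} [Fintype κ] [DecidableEq κ] (p : κ → Prop)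
    [DecidablePred p] (k : κ) :
    #{l : {l // l ≠ k} | p l} = #(({l | p l} : Finset κ).erase k) := by
  refine card_bij (fun l _ => l.1) (fun l hl => ?_) (fun _ _ _ _ h => Subtype.ext h)
    fun l hl => ?_
  · simpa [l.2] using hl
  · simp only [mem_erase, mem_filter, mem_univ, true_and] at hl
    exact ⟨⟨l, hl.1⟩, by simpa using hl.2, rfl⟩

open Finset in
/-- Expanding along row `i`: bijections with a prescribed value restrict to the minor. -/
lemma card_equiv_prescribed_le {ι κ : Type*} [Fintype ι] [Fintype κ] [DecidableEq ι]
    [DecidableEq κ] (R : ι → κ → Prop) [∀ i, DecidablePred (R i)] (i : ι) (k : κ) :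
    #{e ∈ ({e | ∀ j, R j (e j)} : Finset (ι ≃ κ)) | e i = k} ≤
      #{e : {j // j ≠ i} ≃ {l // l ≠ k} | ∀ j : {j // j ≠ i}, R j (e j)} := by
  have hsub (e : ι ≃ κ) (he : e i = k) (j : ι) : j ≠ i ↔ e j ≠ k := by
    rw [← he, e.injective.ne_iff]
  have hval (e : ι ≃ κ) (he : e ∈ {e ∈ ({e | ∀ j, R j (e j)} : Finset (ι ≃ κ)) | e i = k}) :
      (∀ j, R j (e j)) ∧ e i = k := by
    simpa using he
  rw [← card_attach]
  refine card_le_card_of_injOn (fun e => e.1.subtypeEquiv (hsub e.1 (hval _ e.2).2)) ?_ ?_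
  · intro e _
    have h := (hval _ e.2).1
    simpa using fun j _ => h j
  · intro e _ e' _ h
    refine Subtype.ext (Equiv.ext fun j => ?_)
    by_cases hj : j = i
    · rw [hj, (hval _ e.2).2, (hval _ e'.2).2]
    · exact congrArg Subtype.val (Equiv.congr_fun h ⟨j, hj⟩)

open Finset in
/-- The contribution of row `j` to the bounds of all minors along a fixed permutation. -/
lemma log_add_sum_logFactorialDiv_erase {κ : Type*} [Fintype κ] [DecidableEq κ] (K : Finset κ)
    {k₀ : κ} (hk₀ : k₀ ∈ K) :
    Real.log #K + ∑ k ∈ univ.erase k₀, logFactorialDiv #(K.erase k) =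
      Fintype.card κ * logFactorialDiv #K := by
  have hsplit : univ.erase k₀ = K.erase k₀ ∪ Kᶜ := by
    ext k
    by_cases hk : k ∈ K
    · simp [hk]
    · simp only [mem_erase, mem_univ, and_true, mem_union, mem_compl, hk, not_false_iff, or_true,
        iff_true]
      rintro rfl
      exact hk hk₀
  have hdisj : Disjoint (K.erase k₀) Kᶜ :=
    disjoint_compl_right.mono_left (erase_subset _ _)
  rw [hsplit, sum_union hdisj,
    sum_congr rfl fun k hk => by rw [card_erase_of_mem (mem_of_mem_erase hk)],
    sum_congr (s₁ := Kᶜ) rfl fun k hk => by rw [erase_eq_of_notMem (mem_compl.1 hk)],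
    sum_const, sum_const, card_erase_of_mem hk₀, nsmul_eq_mul, nsmul_eq_mul,
    cast_mul_logFactorialDiv, card_compl, Nat.cast_sub (card_le_univ K), sub_mul,
    cast_mul_logFactorialDiv]
  obtain ⟨r, hr⟩ : ∃ r, #K = r + 1 := ⟨#K - 1, by have := card_pos.2 ⟨k₀, hk₀⟩; omega⟩
  rw [hr, log_factorial_succ]
  push_cast
  ring

open Finset in
/-- **Brègman's theorem**, in logarithmic form. -/
theorem log_card_equiv_le (n : ℕ) : ∀ (ι κ : Type u) [Fintype ι] [Fintype κ] [DecidableEq ι]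
    [DecidableEq κ] (R : ι → κ → Prop) [∀ i, DecidablePred (R i)], Fintype.card ι = n →
    Real.log #{e : ι ≃ κ | ∀ i, R i (e i)} ≤ ∑ i, logFactorialDiv #{k | R i k} := by
  induction n with
  | zero =>
    intro ι κ _ _ _ _ R _ hι
    have : IsEmpty ι := Fintype.card_eq_zero_iff.1 hι
    have hle : #{e : ι ≃ κ | ∀ i, R i (e i)} ≤ 1 :=
      card_le_one.2 fun a _ b _ => Equiv.ext fun i => isEmptyElim i
    rw [univ_eq_empty (α := ι), sum_empty]
    exact Real.log_nonpos (by positivity) (by exact_mod_cast hle)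
  | succ n ih =>
    intro ι κ _ _ _ _ R _ hι
    set S : Finset (ι ≃ κ) := {e | ∀ i, R i (e i)} with hS
    rcases S.eq_empty_or_nonempty with hemp | hne
    · rw [hemp]
      simpa using sum_nonneg fun i _ => logFactorialDiv_nonneg _
    have hPpos : (0 : ℝ) < #S := by exact_mod_cast hne.card_pos
    have hmem (e : ι ≃ κ) (he : e ∈ S) (i : ι) : R i (e i) := by
      simp only [hS, mem_filter, mem_univ, true_and] at he
      exact he i
    have hκ : Fintype.card κ = n + 1 := by
      obtain ⟨e, -⟩ := hne
      rw [← Fintype.card_congr e, hι]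
    have hrow (i : ι) : (#S : ℝ) * Real.log #S ≤
        #S * Real.log #{k | R i k} + ∑ e ∈ S, Real.log #{e' ∈ S | e' i = e i} := by
      have hmaps : ∀ e ∈ S, e i ∈ ({k | R i k} : Finset κ) := fun e he => by
        simpa using hmem e he i
      have hcard : (#S : ℝ) = ∑ k ∈ ({k | R i k} : Finset κ), (#{e ∈ S | e i = k} : ℝ) := by
        exact_mod_cast card_eq_sum_card_fiberwise hmaps
      have h := sum_mul_log_le ({k | R i k} : Finset κ) (fun k => (#{e ∈ S | e i = k} : ℝ))
        (fun k _ => by positivity) (hcard ▸ hPpos)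
      rw [← hcard] at h
      refine h.trans_eq ?_
      congr 1
      rw [← sum_fiberwise_of_maps_to hmaps]
      refine sum_congr rfl fun k _ => ?_
      rw [sum_congr rfl fun e he => by rw [(mem_filter.1 he).2], sum_const, nsmul_eq_mul]
    have hminor (e : ι ≃ κ) (he : e ∈ S) (i : ι) : Real.log #{e' ∈ S | e' i = e i} ≤
        ∑ j ∈ univ.erase i, logFactorialDiv #(({k | R j k} : Finset κ).erase (e i)) := by
      have hpos : 0 < #{e' ∈ S | e' i = e i} := card_pos.2 ⟨e, by simp [he]⟩
      have h1 := ih {j // j ≠ i} {l // l ≠ e i} (fun j l => R j l) (by simp [hι])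
      refine (Real.log_le_log (by exact_mod_cast hpos)
        (by exact_mod_cast card_equiv_prescribed_le R i (e i))).trans (h1.trans_eq ?_)
      simp only [card_filter_ne_eq_card_erase]
      exact (sum_subtype (univ.erase i) (by simp)
        fun j => logFactorialDiv #(({k | R j k} : Finset κ).erase (e i))).symm
    have hperm (e : ι ≃ κ) (he : e ∈ S) :
        ∑ i, (Real.log #{k | R i k} + Real.log #{e' ∈ S | e' i = e i}) ≤
          (n + 1) * ∑ i, logFactorialDiv #{k | R i k} := by
      have hswap : ∑ i, ∑ j ∈ univ.erase i,
            logFactorialDiv #(({k | R j k} : Finset κ).erase (e i)) =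
          ∑ j, ∑ k ∈ univ.erase (e j), logFactorialDiv #(({k | R j k} : Finset κ).erase k) := by
        rw [sum_comm' (t' := univ) (s' := fun j => univ.erase j) (by simp [ne_comm])]
        refine sum_congr rfl fun j _ => ?_
        exact sum_equiv e (by simp) (by simp)
      rw [sum_add_distrib]
      refine (add_le_add_right (sum_le_sum fun i _ => hminor e he i) _).trans_eq ?_
      rw [hswap, ← sum_add_distrib, mul_sum]
      refine sum_congr rfl fun j _ => ?_
      rw [log_add_sum_logFactorialDiv_erase _ (by simpa using hmem e he j), hκ]
      push_cast
      rfl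
    have htotal : ((n : ℝ) + 1) * (#S * Real.log #S) ≤
        #S * ((n + 1) * ∑ i, logFactorialDiv #{k | R i k}) := by
      calc ((n : ℝ) + 1) * (#S * Real.log #S) = ∑ _i : ι, (#S : ℝ) * Real.log #S := by
            rw [sum_const, Finset.card_univ, hι, nsmul_eq_mul]
            push_cast
            rfl
        _ ≤ ∑ i, (#S * Real.log #{k | R i k} + ∑ e ∈ S, Real.log #{e' ∈ S | e' i = e i}) :=
            sum_le_sum fun i _ => hrow i
        _ = ∑ e ∈ S, ∑ i, (Real.log #{k | R i k} + Real.log #{e' ∈ S | e' i = e i}) := by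
            rw [sum_comm]
            refine sum_congr rfl fun i _ => ?_
            rw [sum_add_distrib, sum_const, nsmul_eq_mul]
        _ ≤ ∑ _e ∈ S, ((n : ℝ) + 1) * ∑ i, logFactorialDiv #{k | R i k} :=
            sum_le_sum fun e he => hperm e he
        _ = _ := by rw [sum_const, nsmul_eq_mul]
    have hn : (0 : ℝ) < (n : ℝ) + 1 := by positivity
    refine le_of_mul_le_mul_left ?_ (mul_pos hPpos hn)
    linarith

/-- A perfect matching is determined by the involution exchanging the ends of its edges. -/
lemma perfmat_le_card_involutions {V : Type*} [Finite V] (G : SimpleGraph V) :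
    perfmat G ≤ Nat.card {σ : Equiv.Perm V // (∀ x, G.Adj x (σ x)) ∧ ∀ x, σ (σ x) = x} := by
  have hex (M : {M : G.Subgraph | M.IsPerfectMatching}) (v : V) : ∃! w, M.1.Adj v w :=
    SimpleGraph.Subgraph.isPerfectMatching_iff.1 M.2 v
  choose f hf huniq using hex
  have hinv (M) (x : V) : f M (f M x) = x := (huniq M _ _ (hf M x).symm).symm
  rw [perfmat, ← Nat.card_coe_set_eq]
  refine Nat.card_le_card_of_injective (fun M => ⟨⟨f M, f M, hinv M, hinv M⟩,
    fun x => (hf M x).adj_sub, hinv M⟩) fun M N h => ?_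
  have hfun (x : V) : f M x = f N x := Equiv.congr_fun (congrArg Subtype.val h) x
  have hadj (M : {M : G.Subgraph | M.IsPerfectMatching}) (x y : V) :
      M.1.Adj x y ↔ y = f M x := ⟨huniq M x y, fun h => h ▸ hf M x⟩
  refine Subtype.ext (SimpleGraph.Subgraph.ext ?_ ?_)
  · rw [Set.eq_univ_of_forall M.2.2, Set.eq_univ_of_forall N.2.2]
  · ext x y
    rw [hadj, hadj, hfun]

/-- The **Kahn–Lovász theorem**, in logarithmic form. -/
theorem two_mul_log_perfmat_le {V : Type*} [Fintype V] (G : SimpleGraph V)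
    [DecidableRel G.Adj] :
    2 * Real.log (perfmat G) ≤ ∑ v, logFactorialDiv (G.degree v) := by
  classical
  rcases (perfmat G).eq_zero_or_pos with h0 | hpos
  · simpa [h0] using Finset.sum_nonneg fun v _ => logFactorialDiv_nonneg (G.degree v)
  have hle : perfmat G ^ 2 ≤ (Finset.univ.filter fun e : V ≃ V => ∀ i, G.Adj i (e i)).card := by
    refine (Nat.pow_le_pow_left (perfmat_le_card_involutions G) 2).trans
      ((card_involutions_sq_le G.Adj fun _ => G.irrefl).trans_eq ?_)
    rw [Nat.card_eq_fintype_card, Fintype.card_subtype]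
  have hlog := Real.log_le_log (by positivity) (Nat.cast_le (α := ℝ) |>.2 hle)
  rw [Nat.cast_pow, Real.log_pow, Nat.cast_ofNat] at hlog
  refine hlog.trans ((log_card_equiv_le _ V V G.Adj rfl).trans_eq ?_)
  refine Finset.sum_congr rfl fun v _ => ?_
  rw [← G.card_neighborFinset_eq_degree, G.neighborFinset_eq_filter]

lemma degree_pos_of_perfmat_pos {V : Type*} [Fintype V] (G : SimpleGraph V)
    [DecidableRel G.Adj] (h : 0 < perfmat G) (v : V) : 1 ≤ G.degree v := by
  obtain ⟨M, hM⟩ := Set.nonempty_of_ncard_ne_zero h.ne'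
  obtain ⟨w, hw, -⟩ := SimpleGraph.Subgraph.isPerfectMatching_iff.1 hM v
  exact (G.degree_pos_iff_exists_adj v).2 ⟨w, hw.adj_sub⟩

lemma omega2_eq_exp {n m : ℕ} (hn : 0 < n) :
    omega2 n m = Real.exp (n * logFactorialDiv (m / n) + ((m : ℝ) - n * (m / n : ℕ)) *
      (logFactorialDiv (m / n + 1) - logFactorialDiv (m / n))) := by
  have hα : ((m - n * (m / n) : ℕ) : ℝ) = (m : ℝ) - n * (m / n : ℕ) := by
    rw [Nat.cast_sub (Nat.mul_div_le m n), Nat.cast_mul]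
  have hceil : m - n * (m / n) = 0 ∨ (m + n - 1) / n = m / n + 1 := by
    rcases Nat.eq_zero_or_pos (m % n) with h | h
    · left
      have := Nat.div_add_mod m n
      omega
    · right
      have h1 := Nat.div_add_mod m n
      have h2 := Nat.mod_lt m hn
      rw [Nat.div_eq_iff hn, Nat.add_mul, Nat.mul_comm (m / n)]
      omega
  rw [omega2, Real.rpow_def_of_pos (by positivity), Real.rpow_def_of_pos (by positivity),
    ← Real.exp_add]
  congr 1
  rcases hceil with h | h
  · rw [← hα, h]
    simp only [logFactorialDiv, Nat.cast_zero]
    ring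
  · rw [h, hα]
    simp only [logFactorialDiv]
    ring

/-- A simple graph with `2n` vertices and `m` edges, `n ≤ m ≤ C(2n,2)`, has at most
`ω(2n,m)` perfect matchings. -/
theorem stmt_6 {V : Type*} [Fintype V] (G : SimpleGraph V) (n m : ℕ) (hn : 0 < n)
    (hnm : n ≤ m) (hm : m ≤ (2 * n).choose 2) (hV : Fintype.card V = 2 * n)
    (hE : G.edgeSet.ncard = m) :
    (perfmat G : ℝ) ≤ omega2 n m := by
  classical
  rw [omega2_eq_exp hn]
  rcases (perfmat G).eq_zero_or_pos with h0 | hpos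
  · rw [h0, Nat.cast_zero]
    positivity
  have hposR : (0 : ℝ) < perfmat G := by exact_mod_cast hpos
  rw [← Real.log_le_iff_le_exp hposR]
  have hq : 1 ≤ m / n := (Nat.one_le_div_iff hn).2 hnm
  have hdeg : ∑ v, (G.degree v : ℝ) = 2 * m := by
    rw [← hE, ← G.coe_edgeFinset, Set.ncard_coe_finset]
    exact_mod_cast G.sum_degrees_eq_twice_card_edges
  have hsum := Finset.sum_le_sum fun v (_ : v ∈ Finset.univ) =>
    logFactorialDiv_le_linear hq (degree_pos_of_perfmat_pos G hpos v)
  rw [Finset.sum_add_distrib, ← Finset.sum_mul, Finset.sum_sub_distrib, hdeg, Finset.sum_const,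
    Finset.sum_const, Finset.card_univ, hV, nsmul_eq_mul, nsmul_eq_mul] at hsum
  push_cast at hsum
  have := two_mul_log_perfmat_le G
  linarith
end

section
/- Let G be a finite simple bipartite graph with an even number 2n of vertices and m edges. Then there exists a balanced finite simple bipartite graph G_0 with 2n vertices and m edges such that the number of perfect matchings of G is at most the number of perfect matchings of G_0. -/
open Nat

/-- The degree of a vertex, as the cardinality of its neighbor set. -/
noncomputable def ndeg {V : Type*} (G : SimpleGraph V) (v : V) : ℕ :=
  (G.neighborSet v).ncard

/-- A graph is unbalanced if there are vertices `u, v` with `deg v ≥ deg u + 2` such that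
every neighbor of `u` different from `v` is a neighbor of `v`; it is balanced otherwise. -/
def BalancedGraph {V : Type*} (G : SimpleGraph V) : Prop :=
  ¬ ∃ u v : V, ndeg G u + 2 ≤ ndeg G v ∧ ∀ w, G.Adj u w → w ≠ v → G.Adj v w

/-- A graph is bipartite if its vertex set splits into two parts with all edges going
between the parts. -/
def IsBipartite {V : Type*} (G : SimpleGraph V) : Prop :=
  ∃ s : Set V, ∀ ⦃u v : V⦄, G.Adj u v → (u ∈ s ↔ v ∉ s)

/-- The fixed-point-free involutions of the vertex set that move every vertex along an edge. -/
def edgeInvolutions {V : Type*} (G : SimpleGraph V) : Set (V → V) :=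
  {f | (∀ v, G.Adj v (f v)) ∧ ∀ v, f (f v) = v}

/-- Perfect matchings correspond to involutions along edges. -/
theorem perfmat_eq_ncard_edgeInvolutions {V : Type*} (G : SimpleGraph V) :
    perfmat G = (edgeInvolutions G).ncard := by
  symm
  refine Set.ncard_congr
    (fun f hf ↦ { verts := Set.univ
                  Adj := fun a b ↦ f a = b
                  adj_sub := fun {a b} h ↦ h ▸ hf.1 a
                  edge_vert := fun _ ↦ trivial
                  symm := ⟨fun a b h ↦ h ▸ hf.2 a⟩ }) ?_ ?_ ?_
  · intro f hf
    exact ⟨fun a _ ↦ ⟨f a, rfl, fun b (hb : f a = b) ↦ hb.symm⟩, fun a ↦ trivial⟩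
  · intro f g hf hg h
    funext a
    have h1 := congrArg (fun M : G.Subgraph ↦ M.Adj a (f a)) h
    simp only [eq_iff_iff, true_iff] at h1
    exact h1.symm
  · intro M hM
    have hex : ∀ a, ∃! b, M.Adj a b := SimpleGraph.Subgraph.isPerfectMatching_iff.1 hM
    choose f hf hu using hex
    refine ⟨f, ⟨fun a ↦ M.adj_sub (hf a), fun a ↦ (hu _ _ (hf a).symm).symm⟩, ?_⟩
    ext a b
    · simpa using hM.2 a
    · exact ⟨fun h ↦ h ▸ hf a, fun h ↦ (hu _ _ h).symm⟩

/-- The graph obtained by deleting the edge `e` and adding the edge `e'`. -/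
def exchangeEdge {V : Type*} (G : SimpleGraph V) (e e' : Sym2 V) : SimpleGraph V :=
  SimpleGraph.fromEdgeSet (insert e' (G.edgeSet \ {e}))

theorem exchangeEdge_adj {V : Type*} {G : SimpleGraph V} {e e' : Sym2 V} (he' : ¬ e'.IsDiag)
    {a b : V} : (exchangeEdge G e e').Adj a b ↔ s(a, b) = e' ∨ (G.Adj a b ∧ s(a, b) ≠ e) := by
  simp only [exchangeEdge, SimpleGraph.fromEdgeSet_adj, Set.mem_insert_iff, Set.mem_sdiff,
    SimpleGraph.mem_edgeSet, Set.mem_singleton_iff]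
  refine ⟨fun h ↦ h.1, fun h ↦ ⟨h, ?_⟩⟩
  rintro rfl
  rcases h with h | h
  · exact he' (h ▸ rfl)
  · exact h.1.ne rfl

theorem ncard_edgeSet_exchangeEdge {V : Type*} [Finite V] {G : SimpleGraph V} {e e' : Sym2 V}
    (he : e ∈ G.edgeSet) (he' : e' ∉ G.edgeSet) (hd : ¬ e'.IsDiag) :
    (exchangeEdge G e e').edgeSet.ncard = G.edgeSet.ncard := by
  have : (exchangeEdge G e e').edgeSet = insert e' (G.edgeSet \ {e}) := by
    ext x
    induction x with
    | _ a b => simp [exchangeEdge_adj hd]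
  rw [this, Set.ncard_exchange he' he]

/-- The sum of the squares of the degrees. -/
noncomputable def sumSqDeg {V : Type*} [Fintype V] (G : SimpleGraph V) : ℕ :=
  ∑ v, ndeg G v ^ 2

/-- Moving an edge from `v` to a vertex `u` of much smaller degree lowers the sum of the squares
of the degrees. -/
theorem sumSqDeg_exchangeEdge_lt {V : Type*} [Fintype V] {G : SimpleGraph V} {u v w : V}
    (hdeg : ndeg G u + 2 ≤ ndeg G v) (hvw : G.Adj v w) (huw : ¬ G.Adj u w) (hne : w ≠ u) :
    sumSqDeg (exchangeEdge G s(v, w) s(u, w)) < sumSqDeg G := by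
  classical
  have hd : ¬ (s(u, w)).IsDiag := by simpa using hne.symm
  have huv : u ≠ v := by rintro rfl; omega
  have hwv := hvw.ne
  set H := exchangeEdge G s(v, w) s(u, w) with hH
  have hu : ndeg H u = ndeg G u + 1 := by
    rw [ndeg, ndeg, ← Set.ncard_insert_of_notMem (a := w) (by simpa using huw)]
    congr 1
    ext x
    simp [hH, exchangeEdge_adj hd]
    grind
  have hv : ndeg H v + 1 = ndeg G v := by
    rw [ndeg, ndeg, ← Set.ncard_sdiff_singleton_add_one (a := w) (s := G.neighborSet v)
      (by simpa using hvw)]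
    congr 2
    ext x
    simp [hH, exchangeEdge_adj hd]
    grind
  have hw : ndeg H w = ndeg G w := by
    rw [ndeg, ndeg, ← Set.ncard_exchange (a := u) (b := v) (s := G.neighborSet w)
      (by simpa using fun h : G.Adj w u ↦ huw h.symm) (by simpa using hvw.symm)]
    congr 1
    ext x
    simp [hH, exchangeEdge_adj hd]
    grind
  have hother : ∀ x, x ≠ u → x ≠ v → ndeg H x = ndeg G x := by
    intro x hxu hxv
    by_cases hxw : x = w
    · rw [hxw, hw]
    · rw [ndeg, ndeg]
      congr 1
      ext y
      simp [hH, exchangeEdge_adj hd]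
      grind
  have split : ∀ K : SimpleGraph V, sumSqDeg K =
      ndeg K u ^ 2 + (ndeg K v ^ 2 + ∑ x ∈ (Finset.univ.erase u).erase v, ndeg K x ^ 2) := by
    intro K
    rw [sumSqDeg, ← Finset.add_sum_erase _ _ (Finset.mem_univ u),
      ← Finset.add_sum_erase (Finset.univ.erase u) _ (a := v) (by simpa using huv.symm)]
  rw [split, split, hu]
  have : ∑ x ∈ (Finset.univ.erase u).erase v, ndeg H x ^ 2 =
      ∑ x ∈ (Finset.univ.erase u).erase v, ndeg G x ^ 2 := by
    refine Finset.sum_congr rfl fun x hx ↦ ?_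
    simp only [Finset.mem_erase, Finset.mem_univ, and_true] at hx
    rw [hother x hx.2 hx.1]
  rw [this]
  nlinarith

/-- Moving an edge `vw` to `uw`, where the neighbors of `u` are neighbors of `v`, does not lower
the number of perfect matchings. -/
theorem perfmat_le_exchangeEdge {V : Type*} [Finite V] {G : SimpleGraph V} {u v w : V}
    (hnb : ∀ x, G.Adj u x → x ≠ v → G.Adj v x)
    (hvw : G.Adj v w) (huw : ¬ G.Adj u w) (hne : w ≠ u) :
    perfmat G ≤ perfmat (exchangeEdge G s(v, w) s(u, w)) := by
  classical
  have hd : ¬ (s(u, w)).IsDiag := by simpa using hne.symm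
  have huv : u ≠ v := by rintro rfl; exact huw hvw
  rw [perfmat_eq_ncard_edgeInvolutions, perfmat_eq_ncard_edgeInvolutions]
  have hwv := hvw.ne
  refine Set.ncard_le_ncard_of_injOn
    (fun f ↦ if f v = w then Equiv.swap u v ∘ f ∘ Equiv.swap u v else f) ?_ ?_ (Set.toFinite _)
  · rintro f ⟨hf, hff⟩
    split_ifs with h
    · refine ⟨fun a ↦ ?_, fun a ↦ by simp [hff]⟩
      have h1 := hf a
      have h2 := hff a
      have h3 := hf u
      have h4 := hff u
      have h5 := hff v
      have h6 := hnb (f u) h3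
      simp only [exchangeEdge_adj hd, Function.comp_apply, Sym2.eq_iff, ne_eq]
      by_cases hau : a = u
      · subst hau
        simp only [Equiv.swap_apply_left, h, Equiv.swap_apply_of_ne_of_ne hne hwv.symm]
        simp
      by_cases hav : a = v
      · subst hav
        rw [Equiv.swap_apply_right, Equiv.swap_apply_of_ne_of_ne h3.ne' (by grind)]
        grind
      rw [Equiv.swap_apply_of_ne_of_ne hau hav]
      by_cases haw : a = w
      · subst haw
        rw [← h, hff, Equiv.swap_apply_right]
        simp
      by_cases hax : a = f u
      · subst hax
        rw [hff, Equiv.swap_apply_left]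
        have := (h6 hav).symm
        grind
      · rw [Equiv.swap_apply_of_ne_of_ne (by grind) (by grind)]
        grind
    · refine ⟨fun a ↦ ?_, hff⟩
      have h1 := hf a
      have h2 := hff a
      simp only [exchangeEdge_adj hd, Sym2.eq_iff, ne_eq]
      grind
  · have key : ∀ f : V → V, f v = w → (Equiv.swap u v ∘ f ∘ Equiv.swap u v) u = w := by
      intro f h
      simp [h, Equiv.swap_apply_of_ne_of_ne hne hwv.symm]
    rintro f ⟨hf, hff⟩ g ⟨hg, hgg⟩ h
    dsimp only at h
    split_ifs at h with h1 h2 h2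
    · funext a
      have := congrFun h (Equiv.swap u v a)
      simpa using this
    · exact absurd (hg u) (by rw [← h, key f h1]; exact huw)
    · exact absurd (hf u) (by rw [h, key g h2]; exact huw)
    · exact h

/-- If `u` is a pendant vertex at `v`, then an edge from `v` to some other vertex can be exchanged
for an edge at `u` so that the number of perfect matchings grows. -/
theorem perfmat_lt_exchangeEdge_of_pendant {V : Type*} [Finite V] {G : SimpleGraph V}
    {u v w y : V} (hu : ∀ x, G.Adj u x → x = v) (hvw : G.Adj v w) (hwu : w ≠ u)
    (hyu : y ≠ u) (hyw : y ≠ w) {f : V → V} (hf : f ∈ edgeInvolutions G) :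
    perfmat G < perfmat (exchangeEdge G s(v, y) s(u, f w)) := by
  classical
  obtain ⟨hf, hff⟩ := hf
  have hpart : ∀ g ∈ edgeInvolutions G, g u = v ∧ g v = u := fun g hg ↦ by
    have h := hu _ (hg.1 u)
    exact ⟨h, h ▸ hg.2 u⟩
  obtain ⟨hfu, hfv⟩ := hpart f ⟨hf, hff⟩
  have hxu : f w ≠ u := fun h ↦ hvw.ne (by rw [← hff w, h, hfu])
  have hxv : f w ≠ v := fun h ↦ hwu (by rw [← hff w, h, hfv])
  have hd : ¬ (s(u, f w)).IsDiag := by simpa using hxu.symm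
  have huv : u ≠ v := hfu ▸ (hf u).ne
  have hwv := hvw.ne
  rw [perfmat_eq_ncard_edgeInvolutions, perfmat_eq_ncard_edgeInvolutions]
  refine Set.ncard_lt_ncard ⟨?_, ?_⟩ (Set.toFinite _)
  · rintro g hg
    obtain ⟨hgu, hgv⟩ := hpart g hg
    obtain ⟨hg, hgg⟩ := hg
    refine ⟨fun a ↦ ?_, hgg⟩
    have h1 := hg a
    have h2 := hgg a
    simp only [exchangeEdge_adj hd, Sym2.eq_iff, ne_eq]
    grind
  · intro hsub
    have hmem : (Equiv.swap v (f w) ∘ f ∘ Equiv.swap v (f w)) ∈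
        edgeInvolutions (exchangeEdge G s(v, y) s(u, f w)) := by
      refine ⟨fun a ↦ ?_, fun a ↦ by simp [hff]⟩
      have h1 := hf a
      have h2 := hff a
      have h3 := hff w
      simp only [exchangeEdge_adj hd, Function.comp_apply, Sym2.eq_iff, ne_eq]
      by_cases hav : a = v
      · subst hav
        rw [Equiv.swap_apply_left, hff,
          Equiv.swap_apply_of_ne_of_ne hwv.symm (hf w).ne]
        grind
      by_cases hax : a = f w
      · subst hax
        rw [Equiv.swap_apply_right, hfv, Equiv.swap_apply_of_ne_of_ne huv hxu.symm]
        simp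
      rw [Equiv.swap_apply_of_ne_of_ne hav hax]
      by_cases hau : a = u
      · subst hau
        rw [hfu, Equiv.swap_apply_left]
        simp
      by_cases haw : a = w
      · subst haw
        rw [Equiv.swap_apply_right]
        have := hvw.symm
        grind
      · rw [Equiv.swap_apply_of_ne_of_ne (by grind) (by grind)]
        grind
    have h := (hsub hmem).1 u
    rw [Function.comp_apply, Function.comp_apply,
      Equiv.swap_apply_of_ne_of_ne huv hxu.symm, hfu, Equiv.swap_apply_left] at h
    exact hxv (hu _ h)

/-- A bipartite graph on `2 * n` vertices has at most `n * n` edges. -/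
theorem ncard_edgeSet_le_of_isBipartite {V : Type*} [Fintype V] {G : SimpleGraph V} {n : ℕ}
    (hV : Fintype.card V = 2 * n) (hG : IsBipartite G) : G.edgeSet.ncard ≤ n * n := by
  obtain ⟨s, hs⟩ := hG
  have hsub : G.edgeSet ⊆ (fun p : V × V ↦ s(p.1, p.2)) '' (s ×ˢ sᶜ) := by
    intro e he
    induction e with
    | _ a b =>
      have h := hs he
      by_cases ha : a ∈ s
      · exact ⟨(a, b), ⟨ha, h.1 ha⟩, rfl⟩
      · exact ⟨(b, a), ⟨by_contra fun hb ↦ ha (h.2 hb), ha⟩, Sym2.eq_swap⟩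
  have h1 := (Set.ncard_le_ncard hsub (Set.toFinite _)).trans (Set.ncard_image_le (Set.toFinite _))
  rw [Set.ncard_prod] at h1
  have h2 := Set.ncard_add_ncard_compl s
  rw [Nat.card_eq_fintype_card, hV] at h2
  refine h1.trans ?_
  zify at h2 ⊢
  nlinarith [sq_nonneg ((s.ncard : ℤ) - (sᶜ.ncard : ℤ))]

/-- The bipartite graph on `V` with prescribed edges between the two halves of `V`. -/
def graphOfPairs {V : Type*} {n : ℕ} (e : Fin n ⊕ Fin n ≃ V) (E : Set (Fin n × Fin n)) :
    SimpleGraph V :=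
  SimpleGraph.fromEdgeSet ((fun p ↦ s(e (.inl p.1), e (.inr p.2))) '' E)

theorem graphOfPairs_adj {V : Type*} {n : ℕ} {e : Fin n ⊕ Fin n ≃ V} {E : Set (Fin n × Fin n)}
    {a b : V} : (graphOfPairs e E).Adj a b ↔
      ∃ i j, (i, j) ∈ E ∧ ((e (.inl i) = a ∧ e (.inr j) = b) ∨
        (e (.inl i) = b ∧ e (.inr j) = a)) := by
  simp only [graphOfPairs, SimpleGraph.fromEdgeSet_adj, Set.mem_image, Prod.exists, Sym2.eq_iff]
  refine ⟨fun h ↦ h.1, fun h ↦ ⟨h, ?_⟩⟩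
  rintro rfl
  obtain ⟨i, j, -, ⟨h1, h2⟩ | ⟨h1, h2⟩⟩ := h <;> simpa using e.injective (h1.trans h2.symm)

theorem isBipartite_graphOfPairs {V : Type*} {n : ℕ} (e : Fin n ⊕ Fin n ≃ V)
    (E : Set (Fin n × Fin n)) : IsBipartite (graphOfPairs e E) := by
  refine ⟨Set.range fun i ↦ e (.inl i), fun a b h ↦ ?_⟩
  obtain ⟨i, j, -, ⟨rfl, rfl⟩ | ⟨rfl, rfl⟩⟩ := graphOfPairs_adj.1 h <;> simp

theorem ncard_edgeSet_graphOfPairs {V : Type*} {n : ℕ} (e : Fin n ⊕ Fin n ≃ V)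
    (E : Set (Fin n × Fin n)) : (graphOfPairs e E).edgeSet.ncard = E.ncard := by
  have : (graphOfPairs e E).edgeSet = (fun p ↦ s(e (.inl p.1), e (.inr p.2))) '' E := by
    ext x
    induction x with
    | _ a b => simp [graphOfPairs_adj]
  rw [this, Set.ncard_image_of_injective]
  rintro ⟨i, j⟩ ⟨k, l⟩ h
  simpa using h

/-- If all pairs are diagonal, the graph has maximum degree at most one, so it is balanced. -/
theorem balancedGraph_graphOfPairs {V : Type*} {n : ℕ} {e : Fin n ⊕ Fin n ≃ V}
    {E : Set (Fin n × Fin n)} (hE : ∀ p ∈ E, p.1 = p.2) : BalancedGraph (graphOfPairs e E) := by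
  rintro ⟨u, v, hdeg, -⟩
  have : ndeg (graphOfPairs e E) v ≤ 1 := by
    have := Finite.of_equiv _ e
    refine Set.ncard_le_one_iff_subsingleton.2 fun a ha b hb ↦ ?_
    obtain ⟨i, j, hij, h⟩ := graphOfPairs_adj.1 ha
    obtain ⟨k, l, hkl, h'⟩ := graphOfPairs_adj.1 hb
    obtain rfl : i = j := hE _ hij
    obtain rfl : k = l := hE _ hkl
    rcases h with ⟨h1, h2⟩ | ⟨h1, h2⟩ <;> rcases h' with ⟨h3, h4⟩ | ⟨h3, h4⟩
    · have := e.injective (h1.trans h3.symm)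
      grind
    · have := e.injective (h1.trans h4.symm)
      grind
    · have := e.injective (h2.trans h3.symm)
      grind
    · have := e.injective (h2.trans h4.symm)
      grind
  omega

/-- If all diagonal pairs are present, the graph has a perfect matching. -/
theorem perfmat_graphOfPairs_pos {V : Type*} [Finite V] {n : ℕ} {e : Fin n ⊕ Fin n ≃ V}
    {E : Set (Fin n × Fin n)} (hE : ∀ i, (i, i) ∈ E) : 0 < perfmat (graphOfPairs e E) := by
  rw [perfmat_eq_ncard_edgeInvolutions, Set.ncard_pos (Set.toFinite _)]
  refine ⟨fun a ↦ e (e.symm a).swap, fun a ↦ ?_, fun a ↦ by simp⟩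
  obtain ⟨i | i, rfl⟩ := e.surjective a
  · exact graphOfPairs_adj.2 ⟨i, i, hE i, by simp⟩
  · exact graphOfPairs_adj.2 ⟨i, i, hE i, by simp⟩

/-- For each feasible number of edges there is a bipartite graph which is balanced or has a
perfect matching. -/
theorem exists_balancedGraph_or_perfmat_pos {V : Type*} [Fintype V] {n m : ℕ}
    (hV : Fintype.card V = 2 * n) (hm : m ≤ n * n) :
    ∃ H : SimpleGraph V, IsBipartite H ∧ H.edgeSet.ncard = m ∧
      (BalancedGraph H ∨ 0 < perfmat H) := by
  classical
  have e : Fin n ⊕ Fin n ≃ V := Fintype.equivOfCardEq (by simp [hV, two_mul])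
  let D : Finset (Fin n × Fin n) := Finset.univ.image fun i ↦ (i, i)
  have hD : D.card = n := by
    rw [Finset.card_image_of_injective _ fun i j h ↦ (Prod.mk.inj h).1]
    simp
  rcases le_total m n with h | h
  · obtain ⟨E, hED, hE⟩ := Finset.exists_subset_card_eq (h.trans hD.ge)
    refine ⟨graphOfPairs e E, isBipartite_graphOfPairs e E, ?_,
      .inl (balancedGraph_graphOfPairs fun p hp ↦ ?_)⟩
    · rw [ncard_edgeSet_graphOfPairs, Set.ncard_coe_finset, hE]
    · obtain ⟨i, -, rfl⟩ := Finset.mem_image.1 (hED hp)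
      rfl
  · obtain ⟨E, hDE, -, hE⟩ := Finset.exists_subsuperset_card_eq (Finset.subset_univ D)
      (hD.trans_le h) (by simpa using hm)
    refine ⟨graphOfPairs e E, isBipartite_graphOfPairs e E, ?_,
      .inr (perfmat_graphOfPairs_pos fun i ↦ ?_)⟩
    · rw [ncard_edgeSet_graphOfPairs, Set.ncard_coe_finset, hE]
    · exact hDE (Finset.mem_image_of_mem _ (Finset.mem_univ i))

/-- An unbalanced bipartite graph with a perfect matching can be improved by an edge exchange:
either the number of perfect matchings grows, or it does not drop and the degrees become more
even. -/
theorem exists_improvement {V : Type*} [Fintype V] {G : SimpleGraph V} (hG : IsBipartite G)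
    (hpos : 0 < perfmat G) (hunb : ¬ BalancedGraph G) :
    ∃ H : SimpleGraph V, IsBipartite H ∧ H.edgeSet.ncard = G.edgeSet.ncard ∧
      (perfmat G < perfmat H ∨ (perfmat G ≤ perfmat H ∧ sumSqDeg H < sumSqDeg G)) := by
  obtain ⟨s, hs⟩ := hG
  obtain ⟨u, v, hdeg, hnb⟩ := not_not.1 hunb
  have hins : (insert u (G.neighborSet u)).ncard < (G.neighborSet v).ncard :=
    (Set.ncard_insert_le _ _).trans_lt (by unfold ndeg at hdeg; omega)
  obtain ⟨w, hvw, hw⟩ := Set.exists_mem_notMem_of_ncard_lt_ncard hins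
  simp only [Set.mem_insert_iff, SimpleGraph.mem_neighborSet, not_or] at hvw hw
  obtain ⟨hwu, huw⟩ := hw
  by_cases hside : u ∈ s ↔ v ∈ s
  · have hd : ¬ (s(u, w)).IsDiag := by simpa using Ne.symm hwu
    refine ⟨exchangeEdge G s(v, w) s(u, w), ⟨s, fun a b hab ↦ ?_⟩,
      ncard_edgeSet_exchangeEdge (by simpa using hvw) (by simpa using huw) hd,
      .inr ⟨perfmat_le_exchangeEdge hnb hvw huw hwu, sumSqDeg_exchangeEdge_lt hdeg hvw huw hwu⟩⟩
    have := hs hvw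
    rcases (exchangeEdge_adj hd).1 hab with h | h
    · rcases Sym2.eq_iff.1 h with ⟨rfl, rfl⟩ | ⟨rfl, rfl⟩ <;> tauto
    · exact hs h.1
  · have hu : ∀ x, G.Adj u x → x = v := by
      intro x hx
      by_contra hxv
      have h1 := hs hx
      have h2 := hs (hnb x hx hxv)
      tauto
    rw [perfmat_eq_ncard_edgeInvolutions, Set.ncard_pos (Set.toFinite _)] at hpos
    obtain ⟨f, hf⟩ := hpos
    have hfu : f u = v := hu _ (hf.1 u)
    have hu1 : 1 ≤ ndeg G u :=
      (Set.ncard_pos (Set.toFinite _)).2 ⟨f u, hf.1 u⟩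
    have hpair : ({u, w} : Set V).ncard < (G.neighborSet v).ncard :=
      (Set.ncard_pair (Ne.symm hwu)).trans_lt (by unfold ndeg at hdeg hu1; omega)
    obtain ⟨y, hvy, hy⟩ := Set.exists_mem_notMem_of_ncard_lt_ncard hpair
    simp only [Set.mem_insert_iff, Set.mem_singleton_iff, SimpleGraph.mem_neighborSet,
      not_or] at hvy hy
    have hxu : f w ≠ u := fun h ↦ hvw.ne (by rw [← hf.2 w, h, hfu])
    have hxv : f w ≠ v := fun h ↦ hwu (by rw [← hf.2 w, h, ← hfu, hf.2])
    have hd : ¬ (s(u, f w)).IsDiag := by simpa using hxu.symm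
    refine ⟨exchangeEdge G s(v, y) s(u, f w), ⟨s, fun a b hab ↦ ?_⟩,
      ncard_edgeSet_exchangeEdge (by simpa using hvy) (by simpa using fun h ↦ hxv (hu _ h)) hd,
      .inl (perfmat_lt_exchangeEdge_of_pendant hu hvw hwu hy.1 hy.2 hf)⟩
    have h1 := hs hvw
    have h2 := hs (hf.1 w)
    rcases (exchangeEdge_adj hd).1 hab with h | h
    · rcases Sym2.eq_iff.1 h with ⟨rfl, rfl⟩ | ⟨rfl, rfl⟩ <;> tauto
    · exact hs h.1

/-- For every simple bipartite graph `G` with `2n` vertices and `m` edges there is a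
balanced simple bipartite graph `G₀` with `2n` vertices and `m` edges having at least as
many perfect matchings. -/
theorem stmt_9 {V : Type*} [Fintype V] (G : SimpleGraph V) (n m : ℕ)
    (hV : Fintype.card V = 2 * n) (hE : G.edgeSet.ncard = m) (hbip : IsBipartite G) :
    ∃ G0 : SimpleGraph V, BalancedGraph G0 ∧ IsBipartite G0 ∧ G0.edgeSet.ncard = m ∧
      perfmat G ≤ perfmat G0 := by
  let S : Set (SimpleGraph V) := {H | IsBipartite H ∧ H.edgeSet.ncard = m}
  obtain ⟨K, hK, hmax⟩ := Set.exists_max_image S perfmat (Set.toFinite _) ⟨G, hbip, hE⟩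
  obtain ⟨G0, ⟨hG0, hKG0⟩, hmin⟩ := Set.exists_min_image {H | H ∈ S ∧ perfmat K ≤ perfmat H}
    sumSqDeg (Set.toFinite _) ⟨K, hK, le_rfl⟩
  have hG : perfmat G ≤ perfmat K := hmax G ⟨hbip, hE⟩
  rcases Nat.eq_zero_or_pos (perfmat K) with h0 | hpos
  · obtain ⟨H, hH, hHm, hbal | hHpos⟩ := exists_balancedGraph_or_perfmat_pos hV
      (hE ▸ ncard_edgeSet_le_of_isBipartite hV hbip)
    · exact ⟨H, hbal, hH, hHm, by omega⟩
    · have := hmax H ⟨hH, hHm⟩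
      omega
  · refine ⟨G0, ?_, hG0.1, hG0.2, hG.trans hKG0⟩
    by_contra hunb
    obtain ⟨H, hH, hHm, himp⟩ := exists_improvement hG0.1 (hpos.trans_le hKG0) hunb
    have hHS : H ∈ S := ⟨hH, hHm.trans hG0.2⟩
    have h1 := hmax H hHS
    rcases himp with h | ⟨h, hlt⟩
    · omega
    · exact absurd (hmin H ⟨hHS, hKG0.trans h⟩) (by omega)
end

section
/- Let n be a positive even integer and let B be an n×n matrix all of whose entries are 0 or 1. Then per(B) · per(J_n − B) = ((n/2)!)⁴ if and only if there exist permutation matrices P and Q such that P·B·Q equals the block-diagonal matrix J_{n/2} ⊕ J_{n/2} (the direct sum of two (n/2)×(n/2) all-ones blocks). -/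
open Nat Matrix

/-- The permanent of a square integer matrix. -/
def perm {n : ℕ} (M : Matrix (Fin n) (Fin n) ℤ) : ℤ :=
  ∑ σ : Equiv.Perm (Fin n), ∏ i, M i (σ i)

/-- The `n×n` all-ones matrix. -/
def Jmat (n : ℕ) : Matrix (Fin n) (Fin n) ℤ :=
  Matrix.of fun _ _ => 1

open Finset Equiv

section Bregman

variable {α : Type*} [DecidableEq α]

/-- Row supports of the matrix obtained by clearing row `i` and column `j` except for a one at
`(i, j)`; it plays the role of the minor at `(i, j)`. -/
def isolate (A : α → Finset α) (i j : α) : α → Finset α :=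
  fun p => if p = i then {j} else (A p).erase j

theorem isolate_subset {A : α → Finset α} {i j : α} (h : j ∈ A i) (p : α) :
    isolate A i j p ⊆ A p := by
  unfold isolate
  split_ifs with hp
  · subst hp; simpa using h
  · exact erase_subset _ _

variable [Fintype α]

/-- The permutations supported on the `0/1` matrix whose row supports are `A`; their number is the
permanent of that matrix. -/
def matchings (A : α → Finset α) : Finset (Perm α) :=
  univ.filter fun σ => ∀ i, σ i ∈ A i

/-- The logarithm `log (r!) / r` of the Minc–Bregman factor `(r!)^(1/r)`. -/
noncomputable def mincLog (r : ℕ) : ℝ := Real.log (r.factorial : ℝ) / r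

/-- The logarithm of the permanent minus the logarithm of the Minc–Bregman bound. -/
noncomputable def excess (A : α → Finset α) : ℝ :=
  Real.log (#(matchings A) : ℝ) - ∑ i, mincLog #(A i)

/-- The defect of the convexity inequality used for the expansion along row `i`. -/
noncomputable def rowGap (A : α → Finset α) (i : α) : ℝ :=
  ∑ j ∈ A i, (#(matchings (isolate A i j)) : ℝ) * Real.log (#(matchings (isolate A i j)) : ℝ) -
    (#(matchings A) : ℝ) * (Real.log (#(matchings A) : ℝ) - Real.log (#(A i) : ℝ))

theorem mem_matchings {A : α → Finset α} {σ : Perm α} :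
    σ ∈ matchings A ↔ ∀ i, σ i ∈ A i := by
  simp [matchings]

theorem mem_matchings_isolate {A : α → Finset α} {i j : α} (h : j ∈ A i) {σ : Perm α} :
    σ ∈ matchings (isolate A i j) ↔ σ ∈ matchings A ∧ σ i = j := by
  simp only [mem_matchings, isolate]
  constructor
  · intro hσ
    have hi : σ i = j := by simpa using hσ i
    refine ⟨fun p => ?_, hi⟩
    by_cases hp : p = i
    · subst hp; rwa [hi]
    · have := hσ p
      rw [if_neg hp] at this
      exact mem_of_mem_erase this
  · rintro ⟨hσ, rfl⟩ p
    by_cases hp : p = i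
    · simp [hp]
    · rw [if_neg hp]
      exact mem_erase.2 ⟨fun h => hp (σ.injective h), hσ p⟩

theorem matchings_isolate {A : α → Finset α} {i j : α} (h : j ∈ A i) :
    matchings (isolate A i j) = (matchings A).filter fun σ => σ i = j := by
  ext σ
  rw [mem_matchings_isolate h, mem_filter]

theorem sum_card_matchings_isolate_row (A : α → Finset α) (i : α) :
    ∑ j ∈ A i, #(matchings (isolate A i j)) = #(matchings A) := by
  rw [card_eq_sum_card_fiberwise (f := fun σ : Perm α => σ i) (t := A i)
    fun σ hσ => mem_matchings.1 hσ i]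
  exact sum_congr rfl fun j hj => by rw [matchings_isolate hj]

theorem sum_card_matchings_isolate_col (A : α → Finset α) (j : α) :
    ∑ i with j ∈ A i, #(matchings (isolate A i j)) = #(matchings A) := by
  rw [card_eq_sum_card_fiberwise (f := fun σ : Perm α => σ.symm j)
    (t := univ.filter fun i => j ∈ A i)]
  · refine sum_congr rfl fun i hi => ?_
    rw [matchings_isolate (mem_filter.1 hi).2]
    congr 1
    ext σ
    rw [mem_filter, mem_filter, Equiv.symm_apply_eq, eq_comm (a := j)]
  · intro σ hσ
    have := mem_matchings.1 hσ (σ.symm j)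
    simpa using this

theorem mincLog_one : mincLog 1 = 0 := by simp [mincLog]

theorem mul_mincLog (r : ℕ) : (r : ℝ) * mincLog r = Real.log (r.factorial : ℝ) := by
  rcases Nat.eq_zero_or_pos r with rfl | hr
  · simp
  · unfold mincLog
    field_simp

theorem sum_mincLog_isolate_row {A : α → Finset α} {σ : Perm α} (hσ : σ ∈ matchings A) (l : α) :
    ∑ i, mincLog #(isolate A i (σ i) l) + Real.log (#(A l) : ℝ) =
      Fintype.card α * mincLog #(A l) := by
  have hterm : ∀ i, mincLog #(isolate A i (σ i) l) =
      (if σ i ∈ A l then mincLog (#(A l) - 1) else mincLog #(A l)) -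
        if i = l then mincLog (#(A l) - 1) else 0 := by
    intro i
    by_cases hi : i = l
    · subst hi
      simp [isolate, mem_matchings.1 hσ i, mincLog_one]
    · rw [isolate, if_neg (Ne.symm hi), if_neg hi, card_erase_eq_ite]
      split_ifs <;> simp
  have hcard : #(univ.filter fun i => σ i ∈ A l) = #(A l) := by
    have : (univ.filter fun i => σ i ∈ A l) = (A l).map σ.symm.toEmbedding := by
      ext x; simp
    rw [this, card_map]
  have hcard' : (#(univ.filter fun i => σ i ∉ A l) : ℝ) = Fintype.card α - #(A l) := by
    have := card_filter_add_card_filter_not (s := (univ : Finset α)) (fun i => σ i ∈ A l)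
    rw [hcard, Finset.card_univ] at this
    rw [← this]; push_cast; ring
  have hpos : 0 < #(A l) := card_pos.2 ⟨_, mem_matchings.1 hσ l⟩
  simp_rw [hterm]
  rw [sum_sub_distrib, sum_ite, sum_const, sum_const, nsmul_eq_mul, nsmul_eq_mul, hcard, hcard']
  simp only [sum_ite_eq', mem_univ, if_true]
  obtain ⟨r, hr⟩ : ∃ r, #(A l) = r + 1 := ⟨_, (Nat.succ_pred_eq_of_pos hpos).symm⟩
  rw [hr]
  have h1 := mul_mincLog (r + 1)
  have h2 := mul_mincLog r
  rw [Nat.factorial_succ, Nat.cast_mul, Real.log_mul (by positivity) (by positivity), ← h2] at h1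
  simp only [Nat.add_sub_cancel]
  push_cast at *
  linarith

theorem sum_excess_isolate (A : α → Finset α) :
    ∑ σ ∈ matchings A, ∑ i, excess (isolate A i (σ i)) =
      #(matchings A) * Fintype.card α * excess A + ∑ i, rowGap A i := by
  have hlog : ∑ σ ∈ matchings A, ∑ i, Real.log (#(matchings (isolate A i (σ i))) : ℝ) =
      ∑ i, ∑ j ∈ A i, (#(matchings (isolate A i j)) : ℝ) *
        Real.log (#(matchings (isolate A i j)) : ℝ) := by
    rw [sum_comm]
    refine sum_congr rfl fun i _ => ?_
    rw [← sum_fiberwise_of_maps_to (g := fun σ : Perm α => σ i) (t := A i)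
      fun σ hσ => mem_matchings.1 hσ i]
    refine sum_congr rfl fun j hj => ?_
    rw [← matchings_isolate hj, ← nsmul_eq_mul]
    refine sum_eq_card_nsmul fun σ hσ => ?_
    rw [((mem_matchings_isolate hj).1 hσ).2]
  have hbound : ∀ σ ∈ matchings A, ∑ i, ∑ l, mincLog #(isolate A i (σ i) l) =
      Fintype.card α * ∑ l, mincLog #(A l) - ∑ l, Real.log (#(A l) : ℝ) := by
    intro σ hσ
    rw [sum_comm, mul_sum, ← sum_sub_distrib]
    exact sum_congr rfl fun l _ => eq_sub_of_add_eq (sum_mincLog_isolate_row hσ l)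
  simp only [excess, rowGap, sum_sub_distrib]
  rw [hlog, sum_congr rfl hbound, sum_const, nsmul_eq_mul, ← mul_sum, sum_sub_distrib, sum_const,
    Finset.card_univ, nsmul_eq_mul]
  ring

theorem rowGap_eq {A : α → Finset α} (hA : (matchings A).Nonempty) (i : α) :
    rowGap A i = #(A i) * (∑ j ∈ A i, (#(A i) : ℝ)⁻¹ •
        (fun x : ℝ => x * Real.log x) #(matchings (isolate A i j)) -
      (fun x : ℝ => x * Real.log x)
        (∑ j ∈ A i, (#(A i) : ℝ)⁻¹ • (#(matchings (isolate A i j)) : ℝ))) := by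
  obtain ⟨σ, hσ⟩ := hA
  have hr : (#(A i) : ℝ) ≠ 0 :=
    Nat.cast_ne_zero.2 (card_pos.2 ⟨_, mem_matchings.1 hσ i⟩).ne'
  have hN : (#(matchings A) : ℝ) ≠ 0 := Nat.cast_ne_zero.2 (card_pos.2 ⟨_, hσ⟩).ne'
  have hsum : ∑ j ∈ A i, (#(matchings (isolate A i j)) : ℝ) = #(matchings A) := by
    exact_mod_cast sum_card_matchings_isolate_row A i
  simp only [smul_eq_mul, ← mul_sum, hsum, rowGap]
  rw [Real.log_mul (inv_ne_zero hr) hN, Real.log_inv]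
  field_simp
  ring

theorem rowGap_nonneg {A : α → Finset α} (hA : (matchings A).Nonempty) (i : α) :
    0 ≤ rowGap A i := by
  rw [rowGap_eq hA]
  obtain ⟨σ, hσ⟩ := hA
  have hr : (#(A i) : ℝ) ≠ 0 :=
    Nat.cast_ne_zero.2 (card_pos.2 ⟨_, mem_matchings.1 hσ i⟩).ne'
  refine mul_nonneg (Nat.cast_nonneg _) (sub_nonneg.2 ?_)
  refine Real.convexOn_mul_log.map_sum_le (fun _ _ => by positivity) ?_ fun _ _ => ?_
  · simp [hr]
  · simp

theorem card_matchings_isolate_of_rowGap {A : α → Finset α} (hA : (matchings A).Nonempty) {i : α}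
    (h : rowGap A i = 0) {j : α} (hj : j ∈ A i) :
    (#(matchings (isolate A i j)) : ℝ) = #(matchings A) * (#(A i) : ℝ)⁻¹ := by
  rw [rowGap_eq hA] at h
  have hr : (#(A i) : ℝ) ≠ 0 := Nat.cast_ne_zero.2 (card_pos.2 ⟨_, hj⟩).ne'
  have heq := (sub_eq_zero.1 ((mul_eq_zero.1 h).resolve_left hr)).symm
  rw [Real.strictConvexOn_mul_log.map_sum_eq_iff_of_pos (fun _ _ => by positivity) (by simp [hr])
    (by simp)] at heq
  have hsum : ∑ k ∈ A i, (#(matchings (isolate A i k)) : ℝ) = #(matchings A) := by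
    exact_mod_cast sum_card_matchings_isolate_row A i
  rw [sum_congr rfl fun k hk => heq hk hj, sum_const, nsmul_eq_mul] at hsum
  rw [← hsum]
  field_simp

/-- The **Minc–Bregman inequality**, in logarithmic form. -/
theorem excess_nonpos (A : α → Finset α) (hA : (matchings A).Nonempty) : excess A ≤ 0 := by
  induction hs : ∑ i, #(A i) using Nat.strong_induction_on generalizing A with
  | _ s ih =>
    by_contra! hpos
    have hle : ∀ σ ∈ matchings A, ∀ i, excess (isolate A i (σ i)) ≤ excess A ∧
        (excess (isolate A i (σ i)) = excess A → isolate A i (σ i) = A) := by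
      intro σ hσ i
      have hi := mem_matchings.1 hσ i
      by_cases heq : isolate A i (σ i) = A
      · simp [heq]
      · have hlt : excess (isolate A i (σ i)) < excess A := by
          refine lt_of_le_of_lt (ih _ ?_ _ ⟨σ, (mem_matchings_isolate hi).2 ⟨hσ, rfl⟩⟩ rfl) hpos
          rw [← hs]
          obtain ⟨p, hp⟩ := Function.ne_iff.1 heq
          exact sum_lt_sum (fun q _ => card_le_card (isolate_subset hi q))
            ⟨p, mem_univ _, card_lt_card ((isolate_subset hi p).ssubset_of_ne hp)⟩
        exact ⟨hlt.le, fun h => absurd h hlt.ne⟩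
    have hsum := sum_excess_isolate A
    have hgap : 0 ≤ ∑ i, rowGap A i := sum_nonneg fun i _ => rowGap_nonneg hA i
    have hconst : ∑ σ ∈ matchings A, ∑ _i : α, excess A =
        #(matchings A) * Fintype.card α * excess A := by
      simp [mul_assoc]
    have heq : ∑ σ ∈ matchings A, ∑ i, excess (isolate A i (σ i)) =
        ∑ σ ∈ matchings A, ∑ _i : α, excess A :=
      le_antisymm (sum_le_sum fun σ hσ => sum_le_sum fun i _ => (hle σ hσ i).1) (by linarith)
    rw [sum_eq_sum_iff_of_le fun σ hσ => sum_le_sum fun i _ => (hle σ hσ i).1] at heq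
    obtain ⟨σ, hσ⟩ := hA
    have hσeq := heq σ hσ
    rw [sum_eq_sum_iff_of_le fun i _ => (hle σ hσ i).1] at hσeq
    have hrow : ∀ i, A i = {σ i} := by
      intro i
      have := congrFun ((hle σ hσ i).2 (hσeq i (mem_univ _))) i
      simpa [isolate] using this.symm
    have hone : matchings A = {σ} := by
      ext τ
      rw [mem_matchings, mem_singleton, Equiv.ext_iff]
      simp [hrow]
    simp [excess, hone, hrow, mincLog_one] at hpos

/-- Equality in the Minc–Bregman inequality passes to the minors, whose permanents are equal along
each row. -/
theorem isolate_of_excess_eq_zero {A : α → Finset α} (hA : (matchings A).Nonempty)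
    (h : excess A = 0) {i j : α} (hj : j ∈ A i) :
    (#(matchings (isolate A i j)) : ℝ) = #(matchings A) * (#(A i) : ℝ)⁻¹ ∧
      (matchings (isolate A i j)).Nonempty ∧ excess (isolate A i j) = 0 := by
  have hle : ∀ σ ∈ matchings A, ∀ i, excess (isolate A i (σ i)) ≤ 0 := fun σ hσ i =>
    excess_nonpos _ ⟨σ, (mem_matchings_isolate (mem_matchings.1 hσ i)).2 ⟨hσ, rfl⟩⟩
  have hsum := sum_excess_isolate A
  rw [h, mul_zero, zero_add] at hsum
  have hle' : ∀ σ ∈ matchings A, ∑ i, excess (isolate A i (σ i)) ≤ 0 := fun σ hσ =>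
    sum_nonpos fun i _ => hle σ hσ i
  have hgap0 : ∑ i, rowGap A i = 0 :=
    le_antisymm (hsum ▸ sum_nonpos hle') (sum_nonneg fun i _ => rowGap_nonneg hA i)
  have hcard := card_matchings_isolate_of_rowGap hA
    ((sum_eq_zero_iff_of_nonneg fun i _ => rowGap_nonneg hA i).1 hgap0 i (mem_univ _)) hj
  have hne : (matchings (isolate A i j)).Nonempty := by
    rw [← card_pos, ← Nat.cast_pos (α := ℝ), hcard]
    have h1 : 0 < #(matchings A) := card_pos.2 hA
    have h2 : 0 < #(A i) := card_pos.2 ⟨_, hj⟩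
    positivity
  refine ⟨hcard, hne, ?_⟩
  obtain ⟨σ, hσ⟩ := hne
  obtain ⟨hσA, rfl⟩ := (mem_matchings_isolate hj).1 hσ
  rw [hgap0, sum_eq_zero_iff_of_nonpos hle'] at hsum
  exact (sum_eq_zero_iff_of_nonpos fun i _ => hle σ hσA i).1 (hsum σ hσA) i (mem_univ _)

theorem sum_inv_card_of_excess_eq_zero {A : α → Finset α} (hA : (matchings A).Nonempty)
    (h : excess A = 0) (j : α) : ∑ i with j ∈ A i, (#(A i) : ℝ)⁻¹ = 1 := by
  have hcol : ∑ i with j ∈ A i, (#(matchings (isolate A i j)) : ℝ) = #(matchings A) := by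
    exact_mod_cast sum_card_matchings_isolate_col A j
  rw [sum_congr rfl fun i hi => (isolate_of_excess_eq_zero hA h (mem_filter.1 hi).2).1,
    ← mul_sum] at hcol
  have hN : (#(matchings A) : ℝ) ≠ 0 := Nat.cast_ne_zero.2 (card_pos.2 hA).ne'
  exact mul_left_cancel₀ hN (by rw [hcol, mul_one])

theorem card_col_of_excess_eq_zero {A : α → Finset α} (hA : (matchings A).Nonempty)
    (h : excess A = 0) {k : ℕ} (hk : 0 < k) (hcard : ∀ i, #(A i) = k) (j : α) :
    #(univ.filter fun i => j ∈ A i) = k := by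
  have := sum_inv_card_of_excess_eq_zero hA h j
  simp only [hcard, sum_const, nsmul_eq_mul] at this
  field_simp at this
  exact_mod_cast this

/-- In a row-regular equality case of the Minc–Bregman inequality, row supports that meet are
equal. -/
theorem eq_of_mem_of_excess_eq_zero {A : α → Finset α} (hA : (matchings A).Nonempty)
    (h : excess A = 0) {k : ℕ} (hk : 0 < k) (hcard : ∀ i, #(A i) = k) {i p l : α}
    (hi : l ∈ A i) (hp : l ∈ A p) : A i = A p := by
  refine eq_of_subset_of_card_le (fun j hj => ?_) (by rw [hcard, hcard])
  by_contra hjp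
  have hlj : l ≠ j := by rintro rfl; exact hjp hp
  have hpi : p ≠ i := by rintro rfl; exact hjp hj
  obtain ⟨-, hne, h0⟩ := isolate_of_excess_eq_zero hA h hj
  have hsum := sum_inv_card_of_excess_eq_zero hne h0 l
  have hfilter : (univ.filter fun q => l ∈ isolate A i j q) =
      (univ.filter fun q => l ∈ A q).erase i := by
    ext q
    rw [mem_erase, mem_filter, mem_filter, isolate]
    by_cases hq : q = i <;> simp [hq, hlj]
  have hk2 : 2 ≤ k := by
    rw [← hcard i, ← card_pair hlj]
    exact card_le_card (by simp [insert_subset_iff, hi, hj])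
  have hk1 : (0 : ℝ) < ((k - 1 : ℕ) : ℝ) := by exact_mod_cast (by omega : 0 < k - 1)
  have hcardcol : #((univ.filter fun q => l ∈ A q).erase i) = k - 1 := by
    rw [card_erase_of_mem (by simp [hi]), card_col_of_excess_eq_zero hA h hk hcard]
  have hlt : ∑ q ∈ (univ.filter fun q => l ∈ A q).erase i, (#(isolate A i j q) : ℝ)⁻¹ <
      ∑ q ∈ (univ.filter fun q => l ∈ A q).erase i, (((k - 1 : ℕ) : ℝ))⁻¹ := by
    refine sum_lt_sum (fun q hq => ?_) ⟨p, by simp [hpi, hp], ?_⟩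
    · refine inv_anti₀ hk1 ?_
      rw [isolate, if_neg (ne_of_mem_erase hq), ← hcard q]
      exact_mod_cast pred_card_le_card_erase
    · refine inv_strictAnti₀ hk1 ?_
      rw [isolate, if_neg hpi, erase_eq_of_notMem hjp, hcard]
      exact_mod_cast (by omega : k - 1 < k)
  rw [← hfilter, hsum, hfilter, sum_const, hcardcol, nsmul_eq_mul, mul_inv_cancel₀ hk1.ne'] at hlt
  exact lt_irrefl _ hlt

end Bregman

section Concavity

theorem two_mul_log_factorial_lt (r : ℕ) (hr : 1 ≤ r) :
    2 * Real.log (r.factorial : ℝ) <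
      r * (r + 3) * Real.log (r + 1) - r * (r + 1) * Real.log (r + 2) := by
  have hconc : ∀ x : ℝ, 0 < x → Real.log x + Real.log (x + 2) < 2 * Real.log (x + 1) := by
    intro x hx
    rw [← Real.log_mul (by positivity) (by positivity), ← Real.log_rpow (by positivity)]
    refine Real.log_lt_log (by positivity) ?_
    norm_num
    nlinarith
  induction r, hr using Nat.le_induction with
  | base =>
    have := hconc 1 one_pos
    norm_num at this ⊢
    linarith
  | succ r hr ih =>
    have h := mul_lt_mul_of_pos_left (hconc (r + 1) (by positivity))
      (show (0 : ℝ) < (r + 1) * (r + 2) by positivity)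
    rw [Nat.factorial_succ, Nat.cast_mul, Real.log_mul (by positivity) (by positivity)]
    push_cast
    rw [show (r : ℝ) + 1 + 1 = r + 2 by ring, show (r : ℝ) + 1 + 2 = r + 3 by ring] at *
    linarith

theorem mincLog_add_lt_two_mul (r : ℕ) (hr : 1 ≤ r) :
    mincLog r + mincLog (r + 2) < 2 * mincLog (r + 1) := by
  have h := two_mul_log_factorial_lt r hr
  have hr' : (0 : ℝ) < r := by exact_mod_cast hr
  unfold mincLog
  rw [Nat.factorial_succ (r + 1), Nat.factorial_succ r]
  push_cast
  rw [show (r : ℝ) + 1 + 1 = r + 2 by ring, Real.log_mul (by positivity) (by positivity),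
    Real.log_mul (by positivity) (by positivity), ← sub_pos]
  have hfrac : 2 * ((Real.log (r + 1) + Real.log (r.factorial : ℝ)) / ((r : ℝ) + 1)) -
      (Real.log (r.factorial : ℝ) / r + (Real.log (r + 2) +
        (Real.log (r + 1) + Real.log (r.factorial : ℝ))) / ((r : ℝ) + 2)) =
      (r * (r + 3) * Real.log (r + 1) - r * (r + 1) * Real.log (r + 2) -
        2 * Real.log (r.factorial : ℝ)) / (r * (r + 1) * (r + 2)) := by
    field_simp
    ring
  rw [hfrac]
  exact div_pos (sub_pos.2 h) (by positivity)

theorem mincLog_sub_strictAnti : StrictAnti fun r : ℕ => mincLog (r + 2) - mincLog (r + 1) :=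
  strictAnti_nat_of_succ_lt fun r => by
    have := mincLog_add_lt_two_mul (r + 1) (by omega)
    simp only [show r + 1 + 2 = r + 3 by ring, show r + 1 + 1 = r + 2 by ring] at *
    linarith

theorem mincLog_add_mincLog_lt (c t : ℕ) :
    mincLog (c + 1) + mincLog (c + 2 * t + 3) < 2 * mincLog (c + t + 2) := by
  induction t generalizing c with
  | zero => exact mincLog_add_lt_two_mul (c + 1) (by omega)
  | succ t ih =>
    have h1 := ih (c + 1)
    have h2 := mincLog_sub_strictAnti (show c < c + 2 * t + 3 by omega)
    simp only [show c + 1 + 2 * t + 3 = c + 2 * t + 4 by ring,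
      show c + 1 + t + 2 = c + t + 3 by ring, show c + 1 + 1 = c + 2 by ring] at h1
    simp only [show c + 2 * t + 3 + 2 = c + 2 * t + 5 by ring,
      show c + 2 * t + 3 + 1 = c + 2 * t + 4 by ring] at h2
    rw [show c + 2 * (t + 1) + 3 = c + 2 * t + 5 by ring,
      show c + (t + 1) + 2 = c + t + 3 by ring]
    linarith

theorem mincLog_add_mincLog_lt_of_lt {a b m : ℕ} (ha : 0 < a) (hab : a < b)
    (h : a + b = 2 * m) : mincLog a + mincLog b < 2 * mincLog m := by
  have := mincLog_add_mincLog_lt (a - 1) (m - a - 1)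
  rwa [show a - 1 + 1 = a by omega, show a - 1 + 2 * (m - a - 1) + 3 = b by omega,
    show a - 1 + (m - a - 1) + 2 = m by omega] at this

theorem mincLog_add_mincLog_lt_of_ne {a b m : ℕ} (ha : 0 < a) (hb : 0 < b) (h : a + b = 2 * m)
    (hne : a ≠ m) : mincLog a + mincLog b < 2 * mincLog m := by
  rcases lt_or_gt_of_ne (show a ≠ b by omega) with hab | hab
  · exact mincLog_add_mincLog_lt_of_lt ha hab h
  · rw [add_comm]
    exact mincLog_add_mincLog_lt_of_lt hb hab (by omega)

end Concavity

section EqualityCase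

variable {α : Type*} [Fintype α] [DecidableEq α]

theorem card_eq_and_excess_eq_zero {A : α → Finset α} {m : ℕ} (hm : Fintype.card α = 2 * m)
    (h : #(matchings A) * #(matchings fun i => (A i)ᶜ) = m.factorial ^ 4) :
    (matchings A).Nonempty ∧ (∀ i, #(A i) = m) ∧ excess A = 0 := by
  have hpos : 0 < #(matchings A) * #(matchings fun i => (A i)ᶜ) := by rw [h]; positivity
  have hA : (matchings A).Nonempty := card_pos.1 (pos_of_mul_pos_left hpos (Nat.zero_le _))
  have hA' : (matchings fun i => (A i)ᶜ).Nonempty :=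
    card_pos.1 (pos_of_mul_pos_right hpos (Nat.zero_le _))
  have hlog : Real.log (#(matchings A) : ℝ) + Real.log (#(matchings fun i => (A i)ᶜ) : ℝ) =
      ∑ _i : α, 2 * mincLog m := by
    rw [← Real.log_mul (Nat.cast_ne_zero.2 (card_pos.2 hA).ne')
      (Nat.cast_ne_zero.2 (card_pos.2 hA').ne')]
    rw [show (#(matchings A) : ℝ) * (#(matchings fun i => (A i)ᶜ) : ℝ) = (m.factorial : ℝ) ^ 4 by
      exact_mod_cast h, Real.log_pow, ← mul_mincLog, sum_const, Finset.card_univ, hm, nsmul_eq_mul]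
    push_cast
    ring
  have hadd : ∀ i, #(A i) + #((A i)ᶜ) = 2 * m := fun i => by rw [card_add_card_compl, hm]
  have hlt : ∀ i, #(A i) ≠ m → mincLog #(A i) + mincLog #((A i)ᶜ) < 2 * mincLog m := fun i hi =>
    mincLog_add_mincLog_lt_of_ne (card_pos.2 ⟨_, mem_matchings.1 hA.choose_spec i⟩)
      (card_pos.2 ⟨_, mem_matchings.1 hA'.choose_spec i⟩) (hadd i) hi
  have hle : ∀ i ∈ univ, mincLog #(A i) + mincLog #((A i)ᶜ) ≤ 2 * mincLog m := by
    intro i _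
    by_cases hi : #(A i) = m
    · rw [hi, show #((A i)ᶜ) = m by have := hadd i; omega, two_mul]
    · exact (hlt i hi).le
  have hE := excess_nonpos A hA
  have hE' := excess_nonpos _ hA'
  have hsum := sum_le_sum hle
  have hsplit : ∑ i, (mincLog #(A i) + mincLog #((A i)ᶜ)) =
      ∑ i, mincLog #(A i) + ∑ i, mincLog #((A i)ᶜ) := sum_add_distrib
  unfold excess at *
  refine ⟨hA, fun i => ?_, by linarith⟩
  by_contra hi
  exact (hlt i hi).ne ((sum_eq_sum_iff_of_le hle).1 (by linarith) i (mem_univ _))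

/-- The row supports in the extremal case form two complementary blocks. -/
theorem exists_blocks {A : α → Finset α} {m : ℕ} (hm0 : 0 < m) (hm : Fintype.card α = 2 * m)
    (h : #(matchings A) * #(matchings fun i => (A i)ᶜ) = m.factorial ^ 4) :
    ∃ R C : Finset α, #R = m ∧ #C = m ∧ ∀ i j, j ∈ A i ↔ (i ∈ R ↔ j ∈ C) := by
  obtain ⟨hA, hcard, h0⟩ := card_eq_and_excess_eq_zero hm h
  obtain ⟨i₀⟩ : Nonempty α := Fintype.card_pos_iff.1 (by omega)
  obtain ⟨l, hl⟩ : (A i₀).Nonempty := card_pos.1 (by rw [hcard]; exact hm0)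
  refine ⟨univ.filter fun p => l ∈ A p, A i₀,
    card_col_of_excess_eq_zero hA h0 hm0 hcard l, hcard i₀, fun i j => ?_⟩
  rw [mem_filter, and_iff_right (mem_univ i)]
  by_cases hi : l ∈ A i
  · rw [eq_of_mem_of_excess_eq_zero hA h0 hm0 hcard hi hl]
    simp [hl]
  · have hcompl : A i = (A i₀)ᶜ := by
      refine eq_of_subset_of_card_le (fun x hx => mem_compl.2 fun hx' => hi ?_) ?_
      · rwa [eq_of_mem_of_excess_eq_zero hA h0 hm0 hcard hx hx']
      · rw [card_compl, hcard, hcard, hm]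
        omega
    rw [iff_false_left hi, hcompl, mem_compl]

theorem exists_perm_mem_iff {S T : Finset α} (h : #S = #T) :
    ∃ e : Perm α, ∀ x, e x ∈ T ↔ x ∈ S := by
  have e : {x // x ∈ S} ≃ {x // x ∈ T} := Finset.equivOfCardEq h
  refine ⟨e.extendSubtype, fun x => ⟨fun hx => ?_, fun hx => e.extendSubtype_mem x hx⟩⟩
  by_contra hxS
  exact e.extendSubtype_not_mem x hxS hx

end EqualityCase

theorem perm_eq_card_matchings {n : ℕ} {M : Matrix (Fin n) (Fin n) ℤ} {A : Fin n → Finset (Fin n)}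
    (h : ∀ i j, M i j = if j ∈ A i then 1 else 0) : perm M = #(matchings A) := by
  simp only [perm, h, prod_ite_zero, prod_const_one, mem_univ, true_imp_iff]
  simp only [sum_boole, matchings]
  congr!

theorem card_filter_lt_half {n m : ℕ} (h : n = 2 * m) :
    #(univ.filter fun i : Fin n => (i : ℕ) < m) = m := by
  rw [Fin.card_filter_val_lt]
  omega

theorem permMatrix_mul_mul_permMatrix {n : ℕ} (σ τ : Perm (Fin n))
    (B : Matrix (Fin n) (Fin n) ℤ) :
    σ.permMatrix ℤ * B * τ.permMatrix ℤ = B.submatrix σ τ.symm := by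
  rw [Perm.permMatrix, Perm.permMatrix, PEquiv.toMatrix_toPEquiv_mul,
    PEquiv.mul_toMatrix_toPEquiv, Matrix.submatrix_submatrix]
  rfl

theorem card_filter_perm_lt_half {n m : ℕ} (h : n = 2 * m) (σ τ : Perm (Fin n)) :
    #(univ.filter fun ρ : Perm (Fin n) => ∀ i : Fin n, ((i : ℕ) < m ↔ ((τ (ρ (σ i)) : Fin n) : ℕ) < m)) =
      m.factorial ^ 2 := by
  let f : Fin n → Bool := fun i => decide ((i : ℕ) < m)
  have hstab := DomMulAct.stabilizer_card f
  simp only [Fintype.prod_bool, Fintype.card_subtype] at hstab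
  have htrue : #(univ.filter fun i => f i = true) = m := by
    simpa [f] using card_filter_lt_half h
  have hfalse : #(univ.filter fun i => f i = false) = m := by
    have := card_filter_add_card_filter_not (s := (univ : Finset (Fin n))) (fun i => f i = true)
    simp only [Bool.not_eq_true, Finset.card_univ, Fintype.card_fin, htrue] at this
    omega
  rw [htrue, hfalse, ← sq] at hstab
  rw [← hstab]
  refine card_equiv ((Equiv.mulLeft τ).trans (Equiv.mulRight σ)) fun ρ => ?_
  simp [f, funext_iff, iff_comm]

theorem perm_mul_perm_of_submatrix {n m : ℕ} (h : n = 2 * m) {B : Matrix (Fin n) (Fin n) ℤ}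
    {σ τ : Perm (Fin n)}
    (hB : ∀ i j, B (σ i) (τ.symm j) = if ((i : ℕ) < m ↔ (j : ℕ) < m) then 1 else 0) :
    perm B * perm (Jmat n - B) = (m.factorial : ℤ) ^ 4 := by
  have hB' : ∀ i j, B i j = if (((σ.symm i : Fin n) : ℕ) < m ↔ ((τ j : Fin n) : ℕ) < m)
      then 1 else 0 := fun i j => by
    rw [← hB, Equiv.apply_symm_apply, Equiv.symm_apply_apply]
  have hrev : ∀ x : Fin n, (x.rev : ℕ) < m ↔ ¬ (x : ℕ) < m := fun x => by
    rw [Fin.val_rev]; omega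
  rw [perm_eq_card_matchings (M := B) (A := fun i => univ.filter fun j =>
      (((σ.symm i : Fin n) : ℕ) < m ↔ ((τ j : Fin n) : ℕ) < m)) (by simp [hB']),
    perm_eq_card_matchings (M := Jmat n - B) (A := fun i => univ.filter fun j =>
      (((σ.symm i : Fin n) : ℕ) < m ↔ (((τ.trans Fin.revPerm) j : Fin n) : ℕ) < m))]
  · have hcard : ∀ τ : Perm (Fin n), #(matchings fun i => univ.filter fun j =>
        (((σ.symm i : Fin n) : ℕ) < m ↔ ((τ j : Fin n) : ℕ) < m)) = m.factorial ^ 2 := fun τ => by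
      rw [← card_filter_perm_lt_half h σ τ, matchings]
      congr 1
      ext ρ
      simp only [mem_filter, mem_univ, true_and]
      exact ⟨fun H i => by simpa using H (σ i), fun H i => by simpa using H (σ.symm i)⟩
    rw [hcard, hcard]
    push_cast
    ring
  · intro i j
    simp only [Matrix.sub_apply, Jmat, Matrix.of_apply, hB', mem_filter, mem_univ, true_and,
      Equiv.trans_apply, Fin.revPerm_apply, hrev]
    split_ifs <;> first | rfl | (exfalso; tauto)

/-- For even `n > 0` and an `n×n` (0,1)-matrix `B`, one has
`per(B)·per(Jₙ - B) = ((n/2)!)⁴` iff there are permutation matrices `P, Q` with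
`P·B·Q = J_{n/2} ⊕ J_{n/2}` (block diagonal with two `(n/2)×(n/2)` all-ones blocks). -/
theorem stmt_12 (n : ℕ) (hn : 0 < n) (hne : Even n) (B : Matrix (Fin n) (Fin n) ℤ)
    (hB : ∀ i j, B i j = 0 ∨ B i j = 1) :
    perm B * perm (Jmat n - B) = ((n / 2)! : ℤ) ^ 4 ↔
      ∃ σ τ : Equiv.Perm (Fin n),
        (σ.permMatrix ℤ) * B * (τ.permMatrix ℤ) =
          Matrix.of (fun i j : Fin n => if (((i : ℕ) < n / 2) ↔ ((j : ℕ) < n / 2)) then (1 : ℤ) else 0) := by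
  have hm : n = 2 * (n / 2) := (Nat.two_mul_div_two_of_even hne).symm
  simp only [permMatrix_mul_mul_permMatrix, ← Matrix.ext_iff, Matrix.submatrix_apply,
    Matrix.of_apply]
  refine ⟨fun h => ?_, fun ⟨σ, τ, h⟩ => perm_mul_perm_of_submatrix hm h⟩
  let A : Fin n → Finset (Fin n) := fun i => univ.filter fun j => B i j = 1
  have hBA : ∀ i j, B i j = if j ∈ A i then 1 else 0 := fun i j => by
    rcases hB i j with h | h <;> simp [A, h]
  have hJA : ∀ i j, (Jmat n - B) i j = if j ∈ (A i)ᶜ then 1 else 0 := fun i j => by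
    rcases hB i j with h | h <;> simp [A, h, Jmat]
  rw [perm_eq_card_matchings hBA, perm_eq_card_matchings (A := fun i => (A i)ᶜ) hJA] at h
  obtain ⟨R, C, hR, hC, hRC⟩ := exists_blocks (A := A) (m := n / 2) (by omega)
    ((Fintype.card_fin n).trans hm) (by exact_mod_cast h)
  obtain ⟨σ, hσ⟩ := exists_perm_mem_iff ((card_filter_lt_half hm).trans hR.symm)
  obtain ⟨τ, hτ⟩ := exists_perm_mem_iff ((card_filter_lt_half hm).trans hC.symm)
  refine ⟨σ, τ.symm, fun i j => ?_⟩
  rw [hBA]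
  simp [hRC, hσ, hτ]
end
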